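/- For every h ∈ (0,1), every real-valued continuous bounded potential V, and every sufficiently regular L²(ℝ)-valued function Γ(t) of t ∈ ℝ, the FBI transform T_hΓ(z) = 2^{1/4} (2πh)^{−3/4} ∫_ℝ e^{−(z+t)²/(2h)} Γ(t) dt, defined for z = τ + is ∈ ℂ, satisfies the identity (∂_s + ∂ₓ² − V(x)) T_hΓ(z) = − T_h((i∂ₜ − ∂ₓ² + V(x))Γ)(z); in particular, if Γ solves the Schrödinger equation i∂ₜΓ − ∂ₓ²Γ + VΓ = 0 then W(z) = T_hΓ(z) solves the backward heat equation ∂_s W + ∂ₓ²W − V(x)W = 0 in the variable s. -/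

import Mathlib

open MeasureTheory Set

/-- The FBI transform `T_h Γ (z) = 2^{1/4} (2πh)^{-3/4} ∫_ℝ e^{-(z+t)²/(2h)} Γ(t) dt`
of an `L²(ℝ)`-valued function `Γ`, evaluated at `z = τ + is` and at the spatial point `x`. -/
noncomputable def fbiTransform (h : ℝ) (Γ : ℝ → ℝ → ℂ) (τ s x : ℝ) : ℂ :=
  (((2 : ℝ) ^ ((1 : ℝ) / 4) / (2 * Real.pi * h) ^ ((3 : ℝ) / 4) : ℝ) : ℂ) *
    ∫ t : ℝ,
      Complex.exp (-(((τ : ℂ) + (s : ℂ) * Complex.I + (t : ℂ)) ^ 2) / (2 * (h : ℂ))) * Γ t x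

lemma fbi_aux_partial (n : ℕ) (G : ℝ → ℝ → ℂ)
    (hG : ContDiff ℝ ((n + 1 : ℕ) : WithTop ℕ∞) (Function.uncurry G)) :
    ∃ Gt Gx : ℝ → ℝ → ℂ,
      ContDiff ℝ (n : WithTop ℕ∞) (Function.uncurry Gt) ∧
      ContDiff ℝ (n : WithTop ℕ∞) (Function.uncurry Gx) ∧
      (∀ t x, HasDerivAt (fun t' => G t' x) (Gt t x) t) ∧
      (∀ t x, HasDerivAt (fun x' => G t x') (Gx t x) x) := by
  have h1 : ContDiff ℝ (n : WithTop ℕ∞) (fderiv ℝ (Function.uncurry G)) :=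
    hG.fderiv_right (by norm_cast)
  have hd : Differentiable ℝ (Function.uncurry G) := hG.differentiable (by norm_cast)
  refine ⟨fun t x => fderiv ℝ (Function.uncurry G) (t, x) (1, 0),
    fun t x => fderiv ℝ (Function.uncurry G) (t, x) (0, 1), ?_, ?_, ?_, ?_⟩
  · exact h1.clm_apply contDiff_const
  · exact h1.clm_apply contDiff_const
  · intro t x
    exact (hd (t, x)).hasFDerivAt.comp_hasDerivAt t
      ((hasDerivAt_id t).prodMk (hasDerivAt_const t x))
  · intro t x
    exact (hd (t, x)).hasFDerivAt.comp_hasDerivAt x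
      ((hasDerivAt_const x t).prodMk (hasDerivAt_id x))

lemma fbi_aux_compact (R : ℝ) (f : ℝ → ℂ) (hs : ∀ t, R < |t| → f t = 0) :
    HasCompactSupport f := by
  refine HasCompactSupport.intro (K := Icc (-R) R) isCompact_Icc ?_
  intro t ht
  apply hs
  by_contra hc
  exact ht (abs_le.mp (not_lt.mp hc))

lemma fbi_aux_integrable (R : ℝ) (f : ℝ → ℂ) (hf : Continuous f)
    (hs : ∀ t, R < |t| → f t = 0) : Integrable f :=
  hf.integrable_of_hasCompactSupport (fbi_aux_compact R f hs)

lemma fbi_aux_vanish (R : ℝ) (F F' : ℝ → ℝ → ℂ)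
    (hd : ∀ p t, HasDerivAt (fun q => F q t) (F' p t) p)
    (hs : ∀ p t, R < |t| → F p t = 0) : ∀ p t, R < |t| → F' p t = 0 := by
  intro p t ht
  have h1 := hd p t
  have h2 : (fun q => F q t) = fun _ => 0 := funext fun q => hs q t ht
  rw [h2] at h1
  exact h1.unique (hasDerivAt_const p 0)

lemma fbi_aux_deriv (R : ℝ) (F F' : ℝ → ℝ → ℂ)
    (hF : ∀ p, Continuous (F p)) (hF' : Continuous (Function.uncurry F'))
    (hd : ∀ p t, HasDerivAt (fun q => F q t) (F' p t) p)
    (hs : ∀ p t, R < |t| → F p t = 0) (p : ℝ) :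
    HasDerivAt (fun q => ∫ t, F q t) (∫ t, F' p t) p := by
  have hs' := fbi_aux_vanish R F F' hd hs
  obtain ⟨C, hC⟩ := ((isCompact_closedBall p (1:ℝ)).prod
    (isCompact_Icc (a := -R) (b := R))).exists_bound_of_continuousOn hF'.continuousOn
  refine (hasDerivAt_integral_of_dominated_loc_of_deriv_le
    (bound := (Icc (-R) R).indicator fun _ => C)
    (Metric.ball_mem_nhds p one_pos) ?_ ?_ ?_ ?_ ?_ ?_).2
  · exact Filter.Eventually.of_forall fun q => (hF q).aestronglyMeasurable
  · exact fbi_aux_integrable R _ (hF p) (hs p)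
  · exact (hF'.comp (Continuous.prodMk_right p)).aestronglyMeasurable
  · refine Filter.Eventually.of_forall fun t q hq => ?_
    by_cases ht : t ∈ Icc (-R) R
    · rw [indicator_of_mem ht]
      exact hC (q, t) ⟨Metric.ball_subset_closedBall hq, ht⟩
    · rw [indicator_of_notMem ht, hs' q t, norm_zero]
      by_contra hc
      exact ht (abs_le.mp (not_lt.mp hc))
  · exact (integrable_indicator_iff measurableSet_Icc).2
      (integrableOn_const isCompact_Icc.measure_lt_top.ne)
  · exact Filter.Eventually.of_forall fun t q _ => hd q t

/-- The kernel. -/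
noncomputable def fbiKer (h τ s t : ℝ) : ℂ :=
  Complex.exp (-(((τ : ℂ) + (s : ℂ) * Complex.I + (t : ℂ)) ^ 2) / (2 * (h : ℂ)))

/-- Derivative of the kernel in `t`. -/
noncomputable def fbiKerT (h τ s t : ℝ) : ℂ :=
  fbiKer h τ s t * (-(2 * ((τ : ℂ) + (s : ℂ) * Complex.I + (t : ℂ))) / (2 * (h : ℂ)))

lemma fbiKer_cont (h τ : ℝ) : Continuous (fun p : ℝ × ℝ => fbiKer h τ p.1 p.2) := by
  unfold fbiKer; fun_prop

lemma fbiKerT_cont (h τ : ℝ) : Continuous (fun p : ℝ × ℝ => fbiKerT h τ p.1 p.2) := by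
  unfold fbiKerT fbiKer; fun_prop

lemma fbiKer_t (h τ s t : ℝ) : HasDerivAt (fun t => fbiKer h τ s t) (fbiKerT h τ s t) t := by
  unfold fbiKerT fbiKer
  have h1 : HasDerivAt (fun t : ℝ => (τ : ℂ) + (s : ℂ) * Complex.I + (t : ℂ)) 1 t :=
    (Complex.ofRealCLM.hasDerivAt (x := t)).const_add _
  refine HasDerivAt.congr_deriv (((h1.pow 2).neg).div_const (2 * (h : ℂ))).cexp ?_
  simp only [Pi.neg_apply, Pi.pow_apply]
  push_cast
  ring

lemma fbiKer_s (h τ s t : ℝ) :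
    HasDerivAt (fun s => fbiKer h τ s t) (Complex.I * fbiKerT h τ s t) s := by
  unfold fbiKerT fbiKer
  have h1 : HasDerivAt (fun s : ℝ => (τ : ℂ) + (s : ℂ) * Complex.I + (t : ℂ)) (Complex.I) s := by
    have := (((Complex.ofRealCLM.hasDerivAt (x := s)).mul_const Complex.I).const_add
      (τ : ℂ)).add_const (t : ℂ)
    simpa using this
  refine HasDerivAt.congr_deriv (((h1.pow 2).neg).div_const (2 * (h : ℂ))).cexp ?_
  simp only [Pi.neg_apply, Pi.pow_apply]
  push_cast
  ring

/-- **The FBI transform intertwines the Schrödinger and backward heat operators.**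
For `h ∈ (0,1)`, a real-valued continuous bounded potential `V`, and a sufficiently
regular `L²(ℝ)`-valued `Γ(t)` (here: `C²` jointly and compactly supported in `t`),
`(∂_s + ∂ₓ² - V(x)) T_hΓ(z) = -T_h((i∂ₜ - ∂ₓ² + V(x))Γ)(z)` for `z = τ + is`;
in particular, if `Γ` solves `i∂ₜΓ - ∂ₓ²Γ + VΓ = 0`, then `W = T_hΓ` solves the
backward heat equation `∂_s W + ∂ₓ²W - V(x)W = 0` in `s`. -/
theorem fbi_transform_heat_schrodinger
    (h : ℝ) (hh0 : 0 < h) (hh1 : h < 1)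
    (V : ℝ → ℝ) (hVcont : Continuous V) (hVbdd : ∃ M : ℝ, ∀ x : ℝ, |V x| ≤ M)
    (Γ : ℝ → ℝ → ℂ) (hΓreg : ContDiff ℝ 2 (Function.uncurry Γ))
    (hΓsupp : ∃ R : ℝ, ∀ t x : ℝ, R < |t| → Γ t x = 0) :
    (∀ τ s x : ℝ,
      deriv (fun s' => fbiTransform h Γ τ s' x) s
        + deriv (deriv (fun x' => fbiTransform h Γ τ s x')) x
        - (V x : ℂ) * fbiTransform h Γ τ s x
      = -(fbiTransform h
          (fun t y => Complex.I * deriv (fun t' => Γ t' y) t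
            - deriv (deriv (Γ t)) y + (V y : ℂ) * Γ t y) τ s x)) ∧
    ((∀ t x : ℝ, Complex.I * deriv (fun t' => Γ t' x) t
        - deriv (deriv (Γ t)) x + (V x : ℂ) * Γ t x = 0) →
      ∀ τ s x : ℝ,
        deriv (fun s' => fbiTransform h Γ τ s' x) s
          + deriv (deriv (fun x' => fbiTransform h Γ τ s x')) x
          - (V x : ℂ) * fbiTransform h Γ τ s x = 0) := by
  obtain ⟨R, hs⟩ := hΓsupp
  obtain ⟨Gt, Gx, hGt, hGx, dGt, dGx⟩ := fbi_aux_partial 1 Γ (by exact_mod_cast hΓreg)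
  obtain ⟨_, Gxx, _, hGxx, _, dGxx⟩ := fbi_aux_partial 0 Gx (by exact_mod_cast hGx)
  have cG : Continuous (Function.uncurry Γ) := hΓreg.continuous
  have cGt := hGt.continuous
  have cGx := hGx.continuous
  have cGxx := hGxx.continuous
  have sec : ∀ {F : ℝ → ℝ → ℂ}, Continuous (Function.uncurry F) → ∀ x, Continuous fun t => F t x :=
    fun hF x => hF.comp (Continuous.prodMk_left x)
  have hsx : ∀ t x, R < |t| → Gx t x = 0 := fun t x =>
    fbi_aux_vanish R (fun x t => Γ t x) (fun x t => Gx t x) (fun x t => dGx t x)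
      (fun x t => hs t x) x t
  have hsxx : ∀ t x, R < |t| → Gxx t x = 0 := fun t x =>
    fbi_aux_vanish R (fun x t => Gx t x) (fun x t => Gxx t x) (fun x t => dGxx t x)
      (fun x t => hsx t x) x t
  have hst : ∀ t x, R < |t| → Gt t x = 0 := by
    intro t x ht
    have hev : (fun t' => Γ t' x) =ᶠ[nhds t] fun _ => 0 := by
      filter_upwards [(isOpen_lt continuous_const continuous_abs).mem_nhds ht] with t' ht'
      exact hs t' x ht'
    exact (dGt t x).unique ((hasDerivAt_const t (0:ℂ)).congr_of_eventuallyEq hev)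
  have eGt : ∀ t x, deriv (fun t' => Γ t' x) t = Gt t x := fun t x => (dGt t x).deriv
  have eGxx : ∀ t x, deriv (deriv (Γ t)) x = Gxx t x := by
    intro t x
    have : deriv (Γ t) = Gx t := funext fun y => (dGx t y).deriv
    rw [this]
    exact (dGxx t x).deriv
  have main : ∀ τ s x : ℝ,
      deriv (fun s' => fbiTransform h Γ τ s' x) s
        + deriv (deriv (fun x' => fbiTransform h Γ τ s x')) x
        - (V x : ℂ) * fbiTransform h Γ τ s x
      = -(fbiTransform h
          (fun t y => Complex.I * deriv (fun t' => Γ t' y) t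
            - deriv (deriv (Γ t)) y + (V y : ℂ) * Γ t y) τ s x) := by
    intro τ s x
    simp only [eGt, eGxx]
    obtain ⟨c, hc⟩ : ∃ c : ℂ, ∀ F τ s x,
        fbiTransform h F τ s x = c * ∫ t, fbiKer h τ s t * F t x := ⟨_, fun _ _ _ _ => rfl⟩
    simp only [hc]
    have kc : Continuous (fun t => fbiKer h τ s t) := by
      unfold fbiKer; fun_prop
    have kct : Continuous (fun t => fbiKerT h τ s t) := by
      unfold fbiKerT fbiKer; fun_prop
    -- derivative in s
    have ds : HasDerivAt (fun s' => ∫ t, fbiKer h τ s' t * Γ t x)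
        (∫ t, Complex.I * fbiKerT h τ s t * Γ t x) s := by
      refine fbi_aux_deriv R (fun s t => fbiKer h τ s t * Γ t x)
        (fun s t => Complex.I * fbiKerT h τ s t * Γ t x) ?_ ?_ ?_ ?_ s
      · intro p
        exact ((fbiKer_cont h τ).comp (Continuous.prodMk_right p)).mul (sec cG x)
      · exact (continuous_const.mul (fbiKerT_cont h τ)).mul ((sec cG x).comp continuous_snd)
      · intro p t
        exact (fbiKer_s h τ p t).mul_const _
      · intro p t ht
        simp [hs t x ht]
    have dx : ∀ F F' : ℝ → ℝ → ℂ, Continuous (Function.uncurry F) →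
        Continuous (Function.uncurry F') → (∀ t x, HasDerivAt (fun x' => F t x') (F' t x) x) →
        (∀ t x, R < |t| → F t x = 0) → ∀ x,
        HasDerivAt (fun x' => c * ∫ t, fbiKer h τ s t * F t x')
          (c * ∫ t, fbiKer h τ s t * F' t x) x := by
      intro F F' cF cF' dF sF x
      refine HasDerivAt.const_mul c ?_
      refine fbi_aux_deriv R (fun x t => fbiKer h τ s t * F t x)
        (fun x t => fbiKer h τ s t * F' t x) ?_ ?_ ?_ ?_ x
      · intro p
        exact kc.mul (sec cF p)
      · exact (kc.comp continuous_snd).mul (cF'.comp continuous_swap)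
      · intro p t
        exact (dF t p).const_mul _
      · intro p t ht
        simp [sF t p ht]
    have e1 : deriv (fun x' => c * ∫ t, fbiKer h τ s t * Γ t x')
        = fun x' => c * ∫ t, fbiKer h τ s t * Gx t x' :=
      funext fun y => (dx Γ Gx cG cGx dGx hs y).deriv
    rw [e1, (dx Gx Gxx cGx cGxx dGxx hsx x).deriv, (ds.const_mul c).deriv]
    have i1 : Integrable fun t => fbiKerT h τ s t * Γ t x :=
      fbi_aux_integrable R _ (kct.mul (sec cG x)) fun t ht => by simp [hs t x ht]
    have i2 : Integrable fun t => fbiKer h τ s t * Gt t x :=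
      fbi_aux_integrable R _ (kc.mul (sec cGt x)) fun t ht => by simp [hst t x ht]
    have i3 : Integrable fun t => fbiKer h τ s t * Gxx t x :=
      fbi_aux_integrable R _ (kc.mul (sec cGxx x)) fun t ht => by simp [hsxx t x ht]
    have i4 : Integrable fun t => fbiKer h τ s t * Γ t x :=
      fbi_aux_integrable R _ (kc.mul (sec cG x)) fun t ht => by simp [hs t x ht]
    have ibp : (∫ t, fbiKer h τ s t * Gt t x) = -∫ t, fbiKerT h τ s t * Γ t x :=
      integral_mul_deriv_eq_deriv_mul_of_integrable (fun t _ => fbiKer_t h τ s t)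
        (fun t _ => dGt t x) i2 i1 i4
    have e2 : (∫ t, Complex.I * fbiKerT h τ s t * Γ t x)
        = Complex.I * ∫ t, fbiKerT h τ s t * Γ t x := by
      rw [← integral_const_mul]
      simp only [mul_assoc]
    have i5 : Integrable fun t =>
        Complex.I * (fbiKer h τ s t * Gt t x) - fbiKer h τ s t * Gxx t x :=
      (i2.const_mul _).sub i3
    have e3 : (∫ t, fbiKer h τ s t * (Complex.I * Gt t x - Gxx t x + (V x : ℂ) * Γ t x))
        = Complex.I * (∫ t, fbiKer h τ s t * Gt t x) - (∫ t, fbiKer h τ s t * Gxx t x)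
          + (V x : ℂ) * ∫ t, fbiKer h τ s t * Γ t x := by
      rw [← integral_const_mul, ← integral_const_mul, ← integral_sub (i2.const_mul _) i3,
        ← integral_add i5 (i4.const_mul _)]
      congr 1
      funext t
      ring
    rw [e2, e3, ibp]
    ring
  refine ⟨main, fun hz τ s x => ?_⟩
  rw [main]
  simp only [hz]
  simp [fbiTransform]
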